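/- For all x, y ∈ 𝓡, Ψ(x ⊕ y) ∼ Ψ(x) ⊕ Ψ(y). -/

import Mathlib

/-- The ambient space `𝓡` of decimal representations: an integer part together
with a sequence of digits in `{0,…,9}`. -/
abbrev DecimalRep := ℤ × (ℕ → Fin 10)

namespace DecimalRep

open scoped Classical

/-- The truncation `[x]_k = x₀ + ∑_{i=1}^k x_i / 10^i` of `x` up to the `k`-th
digit, as a rational number. -/
def trunc (x : DecimalRep) (k : ℕ) : ℚ :=
  (x.1 : ℚ) + ∑ i ∈ Finset.range k, ((x.2 i : ℕ) : ℚ) / 10 ^ (i + 1)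

/-- The order `⪯` on `𝓡`: `x ⪯ y` iff every truncation of `x` is at most the
corresponding truncation of `y`. -/
def le (x y : DecimalRep) : Prop := ∀ k : ℕ, trunc x k ≤ trunc y k

/-- The strict order `≺` on `𝓡`. -/
def lt (x y : DecimalRep) : Prop := le x y ∧ x ≠ y

/-- Two decimal representations are equivalent ("have no gap") iff there is no
third element lying between them. -/
def equiv (x y : DecimalRep) : Prop :=
  ¬ ∃ z : DecimalRep, z ≠ x ∧ z ≠ y ∧
      ((le x z ∧ le z y) ∨ (le y z ∧ le z x))

/-- `𝓡₉`: decimal representations ending in an infinite string of nines. -/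
def allNines (x : DecimalRep) : Prop := ∃ N : ℕ, ∀ k ≥ N, x.2 k = 9

/-- `ℚ_F`: decimal representations ending in an infinite string of zeros. -/
def finiteDec (x : DecimalRep) : Prop := ∃ N : ℕ, ∀ k ≥ N, x.2 k = 0

/-- The decimal expansion map `ι : ℚ → 𝓡`, satisfying
`[ι(α)]_k = ⌊10^k·α⌋/10^k` for all `k`. -/
def iota (α : ℚ) : DecimalRep :=
  (⌊α⌋, fun k => ⟨(⌊α * 10 ^ (k + 1)⌋ % 10).toNat, by
    have h1 : (0 : ℤ) ≤ ⌊α * 10 ^ (k + 1)⌋ % 10 := Int.emod_nonneg _ (by norm_num)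
    have h2 : ⌊α * 10 ^ (k + 1)⌋ % 10 < 10 := Int.emod_lt_of_pos _ (by norm_num)
    omega⟩)

/-- `M` is a least upper bound of `W` in `(𝓡,⪯)`. -/
def IsLub (W : Set DecimalRep) (M : DecimalRep) : Prop :=
  (∀ w ∈ W, le w M) ∧ ∀ M' : DecimalRep, (∀ w ∈ W, le w M') → le M M'

/-- `M` is a greatest lower bound of `W` in `(𝓡,⪯)`. -/
def IsGlb (W : Set DecimalRep) (M : DecimalRep) : Prop :=
  (∀ w ∈ W, le M w) ∧ ∀ M' : DecimalRep, (∀ w ∈ W, le M' w) → le M' M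

/-- The least upper bound of a set in `(𝓡,⪯)` (junk value if none exists). -/
noncomputable def sup (W : Set DecimalRep) : DecimalRep :=
  if h : ∃ M, IsLub W M then h.choose else default

/-- The greatest lower bound of a set in `(𝓡,⪯)` (junk value if none exists). -/
noncomputable def inf (W : Set DecimalRep) : DecimalRep :=
  if h : ∃ M, IsGlb W M then h.choose else default

/-- Addition `x ⊕ y := sup {ι([x]_k + [y]_k) : k ∈ ℕ}` on `𝓡`. -/
noncomputable def add (x y : DecimalRep) : DecimalRep :=
  sup { z | ∃ k : ℕ, z = iota (trunc x k + trunc y k) }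

/-- The "additive inverse" map `Ψ(x₀.x₁x₂⋯) = (−1−x₀).(9−x₁)(9−x₂)⋯`. -/
def psi (x : DecimalRep) : DecimalRep :=
  (-1 - x.1, fun k => ⟨9 - (x.2 k).val, by have := (x.2 k).isLt; omega⟩)

/-- The signal map: `0` on the nonnegative part, `1` on the negative part. -/
noncomputable def sign (x : DecimalRep) : ℕ :=
  if le (iota 0) x then 0 else 1

/-- The absolute value `‖x‖ := max {x, Ψ(x)}` with respect to `⪯`. -/
noncomputable def norm (x : DecimalRep) : DecimalRep :=
  if le x (psi x) then psi x else x

/-- Multiplication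
`x ⊗ y := Ψ^(sign x + sign y) (sup {ι([‖x‖]_k · [‖y‖]_k) : k ∈ ℕ})` on `𝓡`. -/
noncomputable def mul (x y : DecimalRep) : DecimalRep :=
  psi^[sign x + sign y]
    (sup { z | ∃ k : ℕ, z = iota (trunc (norm x) k * trunc (norm y) k) })

/-- The multiplicative inverse
`x⁻¹ := Ψ^(sign x) (inf {ι(1/[‖x‖]_k) : k ∈ ℕ, [‖x‖]_k > 0})`. -/
noncomputable def inv (x : DecimalRep) : DecimalRep :=
  psi^[sign x]
    (inf { z | ∃ k : ℕ, 0 < trunc (norm x) k ∧ z = iota (1 / trunc (norm x) k) })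

/-- A sequence of rationals is Cauchy. -/
def IsCauchy (x : ℕ → ℚ) : Prop :=
  ∀ ε : ℚ, 0 < ε → ∃ N : ℕ, ∀ m n : ℕ, N ≤ m → N ≤ n → |x m - x n| < ε

/-- The upper limit `inf { sup {f k : k ≥ n} : n ∈ ℕ }` of a sequence in `𝓡`. -/
noncomputable def upperLimit (f : ℕ → DecimalRep) : DecimalRep :=
  inf { z | ∃ n : ℕ, z = sup { w | ∃ k : ℕ, n ≤ k ∧ w = f k } }

/-- The lower limit `sup { inf {f k : k ≥ n} : n ∈ ℕ }` of a sequence in `𝓡`. -/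
noncomputable def lowerLimit (f : ℕ → DecimalRep) : DecimalRep :=
  sup { z | ∃ n : ℕ, z = inf { w | ∃ k : ℕ, n ≤ k ∧ w = f k } }

end DecimalRep

/-!
Write `S x n` for the integer `10 ^ n * [x]_n`. Carries from beyond the `n`-th digit contribute at
most one unit, so `S (x ⊕ y) n` is `S x n + S y n` or `S x n + S y n + 1`, while
`S (Ψ x) n = -1 - S x n`. Hence both sides of the claim have `n`-th scaled truncation `-1 - s` or
`-2 - s` with `s = S x n + S y n`. A third element between them would force their scaled
truncations to differ by at least two for all large `n`.
-/

namespace DecimalRep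

open Filter

/-- The scaled truncation `10 ^ k * [x]_k`. Being an integer, it turns comparisons of truncations
into integer arithmetic; the recursion appends one digit at a time. -/
def scaledTrunc (x : DecimalRep) : ℕ → ℤ
  | 0 => x.1
  | k + 1 => 10 * scaledTrunc x k + (x.2 k : ℕ)

lemma trunc_succ (x : DecimalRep) (k : ℕ) :
    trunc x (k + 1) = trunc x k + (x.2 k : ℕ) / 10 ^ (k + 1) := by
  simp only [trunc, Finset.sum_range_succ, add_assoc]

lemma trunc_mul_pow (x : DecimalRep) (k : ℕ) : trunc x k * 10 ^ k = scaledTrunc x k := by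
  induction k with
  | zero => simp [trunc, scaledTrunc]
  | succ k ih =>
    rw [trunc_succ, add_mul, div_mul_cancel₀ _ (by positivity), pow_succ, ← mul_assoc, ih]
    simp only [scaledTrunc]
    push_cast
    ring

lemma trunc_mono (x : DecimalRep) : Monotone (trunc x) :=
  monotone_nat_of_le_succ fun k ↦ by
    rw [trunc_succ]
    exact le_add_of_nonneg_right (by positivity)

lemma trunc_add_inv_pow_antitone (x : DecimalRep) :
    Antitone fun k ↦ trunc x k + (10 ^ k : ℚ)⁻¹ :=
  antitone_nat_of_succ_le fun k ↦ by
    have digit_le : ((x.2 k : ℕ) : ℚ) ≤ 9 := by exact_mod_cast Nat.le_of_lt_succ (x.2 k).isLt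
    calc trunc x (k + 1) + (10 ^ (k + 1) : ℚ)⁻¹
        = trunc x k + ((x.2 k : ℕ) + 1) / 10 ^ (k + 1) := by rw [trunc_succ]; ring
      _ ≤ trunc x k + (9 + 1) / 10 ^ (k + 1) := by gcongr
      _ = trunc x k + (10 ^ k : ℚ)⁻¹ := by rw [pow_succ]; field_simp; ring

lemma trunc_lt_trunc_add_inv_pow (x : DecimalRep) (k n : ℕ) :
    trunc x k < trunc x n + (10 ^ n : ℚ)⁻¹ :=
  calc trunc x k ≤ trunc x (max k n) := trunc_mono x (le_max_left k n)
    _ < trunc x (max k n) + (10 ^ max k n : ℚ)⁻¹ := lt_add_of_pos_right _ (by positivity)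
    _ ≤ trunc x n + (10 ^ n : ℚ)⁻¹ := trunc_add_inv_pow_antitone x (le_max_right k n)

lemma trunc_mul_pow_lt (x : DecimalRep) (k n : ℕ) :
    trunc x k * 10 ^ n < scaledTrunc x n + 1 :=
  calc trunc x k * 10 ^ n < (trunc x n + (10 ^ n : ℚ)⁻¹) * 10 ^ n := by
        gcongr
        exact trunc_lt_trunc_add_inv_pow x k n
    _ = scaledTrunc x n + 1 := by
        rw [add_mul, trunc_mul_pow, inv_mul_cancel₀ (by positivity)]

lemma scaledTrunc_succ_ediv (x : DecimalRep) (k : ℕ) :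
    scaledTrunc x (k + 1) / 10 = scaledTrunc x k := by
  have := (x.2 k).isLt
  simp only [scaledTrunc]
  omega

lemma exists_scaledTrunc_eq {S : ℕ → ℤ} (hS : ∀ k, S (k + 1) / 10 = S k) :
    ∃ x, scaledTrunc x = S := by
  refine ⟨(S 0, fun k ↦ ⟨(S (k + 1) % 10).toNat, by omega⟩), funext fun k ↦ ?_⟩
  induction k with
  | zero => rfl
  | succ k ih =>
    have := hS k
    simp only [scaledTrunc, ih]
    omega

lemma scaledTrunc_injective : Function.Injective scaledTrunc := by
  intro x y h
  refine Prod.ext (congrFun h 0) (funext fun k ↦ Fin.ext ?_)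
  have hk := congrFun h k
  have hk' := congrFun h (k + 1)
  simp only [scaledTrunc] at hk'
  omega

lemma scaledTrunc_psi (x : DecimalRep) (k : ℕ) :
    scaledTrunc (psi x) k = -1 - scaledTrunc x k := by
  induction k with
  | zero => rfl
  | succ k ih =>
    have := (x.2 k).isLt
    rw [scaledTrunc, scaledTrunc, ih]
    simp only [psi]
    omega

lemma scaledTrunc_iota (α : ℚ) (k : ℕ) : scaledTrunc (iota α) k = ⌊α * 10 ^ k⌋ := by
  induction k with
  | zero => simp [scaledTrunc, iota]
  | succ k ih =>
    have floor_succ_ediv : ⌊α * 10 ^ (k + 1)⌋ / 10 = ⌊α * 10 ^ k⌋ := by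
      rw [show α * 10 ^ k = α * 10 ^ (k + 1) / (10 : ℕ) by rw [pow_succ]; push_cast; ring]
      exact (Int.floor_div_natCast _ 10).symm
    rw [scaledTrunc, ih]
    simp only [iota]
    omega

section Order

variable {x y : DecimalRep}

lemma le_iff_scaledTrunc_le : le x y ↔ ∀ k, scaledTrunc x k ≤ scaledTrunc y k := by
  refine forall_congr' fun k ↦ ?_
  rw [← Int.cast_le (R := ℚ), ← trunc_mul_pow, ← trunc_mul_pow,
    mul_le_mul_iff_of_pos_right (by positivity)]

lemma iota_le_iota {α β : ℚ} (h : α ≤ β) : le (iota α) (iota β) := by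
  refine le_iff_scaledTrunc_le.2 fun k ↦ ?_
  rw [scaledTrunc_iota, scaledTrunc_iota]
  gcongr

lemma scaledTrunc_lt_of_le {m n : ℕ} (hmn : m ≤ n) (h : scaledTrunc x m < scaledTrunc y m) :
    scaledTrunc x n < scaledTrunc y n := by
  induction n, hmn using Nat.le_induction with
  | base => exact h
  | succ n _ ih =>
    rw [← scaledTrunc_succ_ediv x, ← scaledTrunc_succ_ediv y] at ih
    omega

lemma eventually_scaledTrunc_lt (h : lt x y) :
    ∀ᶠ n in atTop, scaledTrunc x n < scaledTrunc y n := by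
  obtain ⟨m, hm⟩ := Function.ne_iff.1 (scaledTrunc_injective.ne h.2)
  have hlt := (le_iff_scaledTrunc_le.1 h.1 m).lt_of_ne hm
  exact eventually_atTop.2 ⟨m, fun n hmn ↦ scaledTrunc_lt_of_le hmn hlt⟩

lemma exists_scaledTrunc_add_two_le {z : DecimalRep} (hxz : lt x z) (hzy : lt z y) :
    ∃ n, scaledTrunc x n + 2 ≤ scaledTrunc y n := by
  obtain ⟨n, hxz, hzy⟩ :=
    ((eventually_scaledTrunc_lt hxz).and (eventually_scaledTrunc_lt hzy)).exists
  exact ⟨n, by omega⟩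

lemma equiv_of_abs_scaledTrunc_sub_le_one
    (h : ∀ n, |scaledTrunc x n - scaledTrunc y n| ≤ 1) : equiv x y := by
  rintro ⟨z, hzx, hzy, ⟨hxz, hzy'⟩ | ⟨hyz, hzx'⟩⟩
  · obtain ⟨n, hn⟩ := exists_scaledTrunc_add_two_le ⟨hxz, hzx.symm⟩ ⟨hzy', hzy⟩
    have := abs_le.1 (h n)
    omega
  · obtain ⟨n, hn⟩ := exists_scaledTrunc_add_two_le ⟨hyz, hzy.symm⟩ ⟨hzx', hzx⟩
    have := abs_le.1 (h n)
    omega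

end Order

section Sup

variable {W : Set DecimalRep} {M N : DecimalRep}

lemma IsLub.unique (hM : IsLub W M) (hN : IsLub W N) : M = N :=
  scaledTrunc_injective <| funext fun k ↦ le_antisymm
    (le_iff_scaledTrunc_le.1 (hM.2 N hN.1) k) (le_iff_scaledTrunc_le.1 (hN.2 M hM.1) k)

lemma IsLub.sup_eq (hM : IsLub W M) : sup W = M := by
  have hex : ∃ M, IsLub W M := ⟨M, hM⟩
  rw [sup, dif_pos hex]
  exact hex.choose_spec.unique hM

lemma isLub_of_isGreatest_scaledTrunc
    (h : ∀ n, IsGreatest ((scaledTrunc · n) '' W) (scaledTrunc M n)) : IsLub W M := by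
  refine ⟨fun w hw ↦ le_iff_scaledTrunc_le.2 fun n ↦ (h n).2 ⟨w, hw, rfl⟩,
    fun B hB ↦ le_iff_scaledTrunc_le.2 fun n ↦ ?_⟩
  obtain ⟨w, hw, hwM⟩ := (h n).1
  exact hwM ▸ le_iff_scaledTrunc_le.1 (hB w hw) n

lemma exists_isGreatest_scaledTrunc (hne : W.Nonempty) (hbdd : ∃ B, ∀ w ∈ W, le w B) :
    ∃ M, ∀ n, IsGreatest ((scaledTrunc · n) '' W) (scaledTrunc M n) := by
  obtain ⟨B, hB⟩ := hbdd
  have bddAbove (n : ℕ) : BddAbove ((scaledTrunc · n) '' W) :=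
    ⟨scaledTrunc B n, Set.forall_mem_image.2 fun w hw ↦ le_iff_scaledTrunc_le.1 (hB w hw) n⟩
  have isGreatest (n : ℕ) :
      IsGreatest ((scaledTrunc · n) '' W) (sSup ((scaledTrunc · n) '' W)) :=
    ⟨Int.csSup_mem (hne.image _) (bddAbove n), fun _ ↦ le_csSup (bddAbove n)⟩
  -- Dropping the last digit is monotone, so it carries the maximum at level `n + 1` to the one
  -- at level `n`: the maxima are the truncations of a single decimal representation.
  have ediv_mono : Monotone fun a : ℤ ↦ a / 10 := fun _ _ h ↦ Int.ediv_le_ediv (by norm_num) h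
  obtain ⟨M, hM⟩ := exists_scaledTrunc_eq (S := fun n ↦ sSup ((scaledTrunc · n) '' W)) fun n ↦ by
    have h := ediv_mono.map_isGreatest (isGreatest (n + 1))
    simp only [Set.image_image, scaledTrunc_succ_ediv] at h
    exact h.unique (isGreatest n)
  exact ⟨M, fun n ↦ hM ▸ isGreatest n⟩

lemma isGreatest_scaledTrunc_sup (hne : W.Nonempty) (hbdd : ∃ B, ∀ w ∈ W, le w B) (n : ℕ) :
    IsGreatest ((scaledTrunc · n) '' W) (scaledTrunc (sup W) n) := by
  obtain ⟨M, hM⟩ := exists_isGreatest_scaledTrunc hne hbdd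
  rw [(isLub_of_isGreatest_scaledTrunc hM).sup_eq]
  exact hM n

end Sup

section Add

variable (x y : DecimalRep)

lemma add_eq_sup_range : add x y = sup (Set.range fun k ↦ iota (trunc x k + trunc y k)) := by
  simp only [add, Set.range, eq_comm]

lemma isGreatest_scaledTrunc_add (n : ℕ) :
    IsGreatest (Set.range fun k ↦ ⌊(trunc x k + trunc y k) * 10 ^ n⌋)
      (scaledTrunc (add x y) n) := by
  have hbdd : ∃ B, ∀ w ∈ Set.range fun k ↦ iota (trunc x k + trunc y k), le w B := by
    refine ⟨iota (trunc x 0 + (10 ^ 0)⁻¹ + (trunc y 0 + (10 ^ 0)⁻¹)),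
      Set.forall_mem_range.2 fun k ↦ iota_le_iota ?_⟩
    exact add_le_add (trunc_lt_trunc_add_inv_pow x k 0).le (trunc_lt_trunc_add_inv_pow y k 0).le
  have h := isGreatest_scaledTrunc_sup (Set.range_nonempty _) hbdd n
  simp only [← Set.range_comp, Function.comp_def, scaledTrunc_iota] at h
  rwa [add_eq_sup_range]

lemma scaledTrunc_add_le (n : ℕ) :
    scaledTrunc (add x y) n ≤ scaledTrunc x n + scaledTrunc y n + 1 := by
  obtain ⟨k, hk⟩ := (isGreatest_scaledTrunc_add x y n).1
  rw [← hk, ← Int.lt_add_one_iff, Int.floor_lt]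
  push_cast
  linarith [trunc_mul_pow_lt x k n, trunc_mul_pow_lt y k n]

lemma le_scaledTrunc_add (n : ℕ) :
    scaledTrunc x n + scaledTrunc y n ≤ scaledTrunc (add x y) n := by
  refine (isGreatest_scaledTrunc_add x y n).2 ⟨n, ?_⟩
  simp only [add_mul, trunc_mul_pow, ← Int.cast_add, Int.floor_intCast]

end Add

end DecimalRep

open DecimalRep in
/-- `Ψ(x ⊕ y) ∼ Ψ(x) ⊕ Ψ(y)`. -/
theorem psi_add_equiv (x y : DecimalRep) :
    equiv (psi (add x y)) (add (psi x) (psi y)) := by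
  refine equiv_of_abs_scaledTrunc_sub_le_one fun n ↦ ?_
  have hle := scaledTrunc_add_le x y n
  have hge := le_scaledTrunc_add x y n
  have hle' := scaledTrunc_add_le (psi x) (psi y) n
  have hge' := le_scaledTrunc_add (psi x) (psi y) n
  rw [scaledTrunc_psi, scaledTrunc_psi] at hle' hge'
  rw [scaledTrunc_psi, abs_le]
  omega
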